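/- arXiv:2101.03558 — 2 statements merged into one kernel-verified Lean document; each statement's English description precedes it below -/
import Mathlib

section
/- Let H be a real inner product space, let B > 0 and ρ > 0, let T be a positive integer, and set η = B/(ρ·√T). Let v₁, …, v_T ∈ H be arbitrary vectors with ‖vₜ‖ ≤ ρ for every t, and define the iterates w⁽¹⁾ = 0 and w⁽ᵗ⁺¹⁾ = w⁽ᵗ⁾ − η·vₜ. Then for every w⋆ ∈ H with ‖w⋆‖ ≤ B, the averaged linearized regret satisfies (1/T)·Σ_{t=1}^T ⟨w⁽ᵗ⁾ − w⋆, vₜ⟩ ≤ (B·ρ)/√T. -/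
/-!
The squared distance to the comparator is a potential: one step changes
`‖w t - w⋆‖²` by `-2η ⟪w t - w⋆, v t⟫ + η²‖v t‖²`. Summing telescopes to
`2η ∑ₜ ⟪w t - w⋆, v t⟫ ≤ ‖w⋆‖² + T η² ρ² ≤ 2B²`, since the chosen step size makes
`T η² ρ² = B²`. Dividing by `2ηT` gives the bound.
-/

open scoped RealInnerProductSpace BigOperators

/-- **Deterministic regret bound for (sub)gradient descent** (core inequality
in the proof of Theorem 1 of the paper).  In a real inner product space, with
step size `η = B / (ρ√T)`, iterates `w⁽¹⁾ = 0`, `w⁽ᵗ⁺¹⁾ = w⁽ᵗ⁾ - η • vₜ`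
(0-indexed here), and vectors `vₜ` of norm at most `ρ`, the averaged linearized
regret against any comparator `w⋆` with `‖w⋆‖ ≤ B` satisfies
`(1/T) ∑ₜ ⟪w⁽ᵗ⁾ - w⋆, vₜ⟫ ≤ Bρ/√T`. -/
theorem gradient_descent_regret_bound
    {H : Type*} [NormedAddCommGroup H] [InnerProductSpace ℝ H]
    (B ρ : ℝ) (hB : 0 < B) (hρ : 0 < ρ)
    (T : ℕ) (hT : 0 < T)
    (η : ℝ) (hη : η = B / (ρ * Real.sqrt T))
    (v : Fin T → H) (hv : ∀ t, ‖v t‖ ≤ ρ)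
    (w : ℕ → H) (hw0 : w 0 = 0)
    (hupd : ∀ t : Fin T, w (t + 1) = w t - η • v t) :
    ∀ wstar : H, ‖wstar‖ ≤ B →
      (1 / (T : ℝ)) * ∑ t : Fin T, ⟪w t - wstar, v t⟫ ≤ B * ρ / Real.sqrt T := by
  intro wstar hws
  have hT' : (0 : ℝ) < T := by exact_mod_cast hT
  obtain ⟨s, hs⟩ : ∃ s, s = Real.sqrt T := ⟨_, rfl⟩
  have hs0 : 0 < s := hs ▸ Real.sqrt_pos.mpr hT'
  have hss : (T : ℝ) = s ^ 2 := by rw [hs, Real.sq_sqrt hT'.le]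
  rw [← hs] at hη ⊢
  have hη0 : 0 < η := by rw [hη]; positivity
  have step : ∀ t : Fin T, 2 * η * ⟪w t - wstar, v t⟫ ≤
      (‖w (t : ℕ) - wstar‖ ^ 2 - ‖w ((t : ℕ) + 1) - wstar‖ ^ 2) + η ^ 2 * ρ ^ 2 := by
    intro t
    have hsq : ‖v t‖ ^ 2 ≤ ρ ^ 2 := pow_le_pow_left₀ (norm_nonneg _) (hv t) 2
    have hexp : ‖w ((t : ℕ) + 1) - wstar‖ ^ 2 =
        ‖w (t : ℕ) - wstar‖ ^ 2 - 2 * (η * ⟪w t - wstar, v t⟫) + η ^ 2 * ‖v t‖ ^ 2 := by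
      rw [hupd t, sub_right_comm, norm_sub_sq_real, real_inner_smul_right, norm_smul, mul_pow,
        Real.norm_eq_abs, sq_abs]
    have := mul_le_mul_of_nonneg_left hsq (sq_nonneg η)
    linarith
  have htel : ∑ t : Fin T, (‖w (t : ℕ) - wstar‖ ^ 2 - ‖w ((t : ℕ) + 1) - wstar‖ ^ 2) =
      ‖w 0 - wstar‖ ^ 2 - ‖w T - wstar‖ ^ 2 := by
    rw [Fin.sum_univ_eq_sum_range
      (fun t => ‖w t - wstar‖ ^ 2 - ‖w (t + 1) - wstar‖ ^ 2) T, Finset.sum_range_sub']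
  have hsum := Finset.sum_le_sum fun t (_ : t ∈ Finset.univ) => step t
  rw [← Finset.mul_sum, Finset.sum_add_distrib, htel, Finset.sum_const, Finset.card_univ,
    Fintype.card_fin, nsmul_eq_mul, hw0, zero_sub, norm_neg] at hsum
  have hB2 : ‖wstar‖ ^ 2 ≤ B ^ 2 := pow_le_pow_left₀ (norm_nonneg _) hws 2
  have hηT : (T : ℝ) * (η ^ 2 * ρ ^ 2) = B ^ 2 := by
    rw [hη, hss]
    field_simp
  have hB2η : B ^ 2 = η * (B * ρ * s) := by
    rw [hη]
    field_simp
  have hreg : ∑ t : Fin T, ⟪w t - wstar, v t⟫ ≤ B * ρ * s := by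
    refine le_of_mul_le_mul_left ?_ hη0
    linarith [sq_nonneg ‖w T - wstar‖]
  calc (1 / (T : ℝ)) * ∑ t : Fin T, ⟪w t - wstar, v t⟫
      ≤ (1 / (T : ℝ)) * (B * ρ * s) := by gcongr
    _ = B * ρ / s := by
      rw [hss]
      field_simp
end

section
/- Let Ω be a finite nonempty type, let P : Ω → ℝ be a probability mass function, and let (Q_w)_{w ∈ W} be a family of probability mass functions on Ω indexed by a set W, with Q_w(x) > 0 whenever P(x) > 0, for every w ∈ W. Define the risk L(w) = −Σₓ P(x)·log Q_w(x). Suppose there exists w′ ∈ W with KL(P, Q_{w′}) = 0 and L(w′) = inf_{w ∈ W} L(w). If w̄ ∈ W satisfies L(w̄) ≤ inf_{w ∈ W} L(w) + ε for some ε ≥ 0, then: (a) KL(P, Q_{w̄}) ≤ ε, and (b) the total variation (ℓ₁) distance satisfies Σₓ |P(x) − Q_{w̄}(x)| ≤ √(2ε). -/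
/-!
Since `L(w) = KL(P, Q_w) + H(P)` (`logRisk_eq`), subtracting the risks of `wbar` and `w'` gives
`KL(P, Q_wbar) = L(wbar) - L(w') ≤ ε`.  The `ℓ₁` bound then follows from Pinsker's inequality
`l₁(P, Q)² ≤ 2 KL(P, Q)` (`pinsker`).

Pinsker's inequality rests on the pointwise bound
`(p - q)² ≤ ((2p + 4q) / 3) * (p log (p / q) - p + q)`, which is an inequality in the single variable
`t = p / q`.  By the Cauchy–Schwarz inequality,
`(∑ |p - q|)² ≤ (∑ (2p + 4q) / 3) * ∑ (p log (p / q) - p + q) = 2 KL(P, Q)`.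
-/

open scoped BigOperators

/-- The Kullback–Leibler divergence between two probability mass functions on a
finite type, `KL(P, Q) = ∑ₓ P x * log (P x / Q x)` (with the convention
`0 * log (0 / q) = 0`, which holds automatically). -/
noncomputable def klDivergence {Ω : Type*} [Fintype Ω] (P Q : Ω → ℝ) : ℝ :=
  ∑ x, P x * Real.log (P x / Q x)

/-- The risk under the log loss: `L(w) = -∑ₓ P x * log (Q_w x)`. -/
noncomputable def logRisk {Ω W : Type*} [Fintype Ω]
    (P : Ω → ℝ) (Q : W → Ω → ℝ) (w : W) : ℝ :=
  -∑ x, P x * Real.log (Q w x)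

/-- The difference of the two sides has derivative `(t - 1)³ / (t² (t + 2)²)` and vanishes
at `t = 1`, which is therefore its minimum on `(0, ∞)`. -/
lemma rational_le_log {t : ℝ} (ht : 0 < t) :
    (t - 1) * (5 * t + 1) / (2 * t * (t + 2)) ≤ Real.log t := by
  let g : ℝ → ℝ := fun s => Real.log s - (s - 1) * (5 * s + 1) / (2 * s * (s + 2))
  have hd : ∀ s : ℝ, 0 < s → HasDerivAt g ((s - 1) ^ 3 / (s ^ 2 * (s + 2) ^ 2)) s := by
    intro s hs
    have h1 : HasDerivAt (fun s : ℝ => (s - 1) * (5 * s + 1))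
        (1 * (5 * s + 1) + (s - 1) * (5 * 1)) s :=
      ((hasDerivAt_id s).sub_const 1).mul (((hasDerivAt_id s).const_mul 5).add_const 1)
    have h2 : HasDerivAt (fun s : ℝ => 2 * s * (s + 2)) (2 * 1 * (s + 2) + 2 * s * 1) s :=
      ((hasDerivAt_id s).const_mul 2).mul ((hasDerivAt_id s).add_const 2)
    have hne : 2 * s * (s + 2) ≠ 0 := by positivity
    refine ((Real.hasDerivAt_log hs.ne').sub (h1.div h2 hne)).congr_deriv ?_
    have : s + 2 ≠ 0 := by positivity
    field_simp
    ring
  have hg1 : g 1 = 0 := by simp [g]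
  suffices h : 0 ≤ g t from sub_nonneg.mp h
  rw [← hg1]
  rcases le_total 1 t with h | h
  · refine monotoneOn_of_deriv_nonneg (convex_Ici (1 : ℝ))
      (fun s hs => (hd s (lt_of_lt_of_le one_pos hs)).continuousAt.continuousWithinAt) ?_ ?_
      (Set.mem_Ici.2 le_rfl) (Set.mem_Ici.2 h) h
    all_goals
      intro s hs
      rw [interior_Ici, Set.mem_Ioi] at hs
      have hs0 : 0 < s := one_pos.trans hs
    · exact (hd s hs0).differentiableAt.differentiableWithinAt
    · rw [(hd s hs0).deriv]
      have : 0 ≤ s - 1 := by linarith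
      positivity
  · refine antitoneOn_of_deriv_nonpos (convex_Icc t 1)
      (fun s hs => (hd s (ht.trans_le hs.1)).continuousAt.continuousWithinAt) ?_ ?_
      (Set.left_mem_Icc.2 h) (Set.right_mem_Icc.2 h) h
    all_goals
      intro s hs
      rw [interior_Icc] at hs
      have hs0 : 0 < s := ht.trans hs.1
    · exact (hd s hs0).differentiableAt.differentiableWithinAt
    · rw [(hd s hs0).deriv]
      have h3 : (s - 1) ^ 3 ≤ 0 := Odd.pow_nonpos (by decide) (by linarith [hs.2])
      exact div_nonpos_of_nonpos_of_nonneg h3 (by positivity)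

lemma mul_log_div_lower_bound {p q : ℝ} (hp : 0 < p) (hq : 0 < q) :
    3 * (p - q) ^ 2 / (2 * p + 4 * q) ≤ p * Real.log (p / q) - p + q := by
  have h := mul_le_mul_of_nonneg_left (rational_le_log (div_pos hp hq)) hp.le
  have e : p * ((p / q - 1) * (5 * (p / q) + 1) / (2 * (p / q) * (p / q + 2))) =
      3 * (p - q) ^ 2 / (2 * p + 4 * q) + p - q := by
    have h1 : p + 2 * q ≠ 0 := by positivity
    have h2 : 2 * p + 4 * q ≠ 0 := by positivity
    have h3 : p / q + 2 ≠ 0 := by positivity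
    have h4 : p + q * 2 ≠ 0 := by positivity
    field_simp
    ring
  linarith

/-- The pointwise estimate behind Pinsker's inequality, in the form needed for Cauchy–Schwarz. -/
lemma sq_sub_le_mul {p q : ℝ} (hp : 0 ≤ p) (hq : 0 ≤ q) (hpq : 0 < p → 0 < q) :
    0 ≤ p * Real.log (p / q) - p + q ∧
      (p - q) ^ 2 ≤ (2 * p + 4 * q) / 3 * (p * Real.log (p / q) - p + q) := by
  rcases hp.eq_or_lt with rfl | hp
  · simp only [zero_mul, zero_div]
    exact ⟨by linarith, by nlinarith [sq_nonneg q]⟩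
  · have hq := hpq hp
    have h := mul_log_div_lower_bound hp hq
    refine ⟨le_trans (by positivity) h, ?_⟩
    rw [div_le_iff₀ (by positivity)] at h
    linarith

/-- **Pinsker's inequality** for probability mass functions on a finite type. -/
lemma pinsker {Ω : Type*} [Fintype Ω] (P Q : Ω → ℝ)
    (hP : ∀ x, 0 ≤ P x) (hPsum : ∑ x, P x = 1)
    (hQ : ∀ x, 0 ≤ Q x) (hQsum : ∑ x, Q x = 1) (habs : ∀ x, 0 < P x → 0 < Q x) :
    (∑ x, |P x - Q x|) ^ 2 ≤ 2 * klDivergence P Q := by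
  have h := fun x => sq_sub_le_mul (hP x) (hQ x) (habs x)
  have hcs : (∑ x, |P x - Q x|) ^ 2 ≤
      (∑ x, (2 * P x + 4 * Q x) / 3) * ∑ x, (P x * Real.log (P x / Q x) - P x + Q x) :=
    Finset.sum_sq_le_sum_mul_sum_of_sq_le_mul _
      (fun x _ => by have := hP x; have := hQ x; positivity) (fun x _ => (h x).1)
      (fun x _ => by rw [sq_abs]; exact (h x).2)
  have h1 : ∑ x, (2 * P x + 4 * Q x) / 3 = 2 := by
    rw [← Finset.sum_div, Finset.sum_add_distrib, ← Finset.mul_sum, ← Finset.mul_sum, hPsum, hQsum]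
    norm_num
  have h2 : ∑ x, (P x * Real.log (P x / Q x) - P x + Q x) = klDivergence P Q := by
    rw [Finset.sum_add_distrib, Finset.sum_sub_distrib, hPsum, hQsum, klDivergence]
    ring
  rwa [h1, h2] at hcs

/-- The risk is the divergence plus the entropy of `P`. -/
lemma logRisk_eq {Ω W : Type*} [Fintype Ω] (P : Ω → ℝ) (Q : W → Ω → ℝ)
    (hP : ∀ x, 0 ≤ P x) (w : W) (habs : ∀ x, 0 < P x → 0 < Q w x) :
    logRisk P Q w = klDivergence P (Q w) + -∑ x, P x * Real.log (P x) := by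
  rw [logRisk, klDivergence, ← sub_eq_add_neg, ← Finset.sum_sub_distrib, ← Finset.sum_neg_distrib]
  refine Finset.sum_congr rfl fun x _ => ?_
  rcases (hP x).eq_or_lt with h | h
  · simp [← h]
  · rw [Real.log_div h.ne' (habs x h).ne']
    ring

/-- **Lemma 1 of the paper.**  Let `P` be a probability mass function on a
finite nonempty type `Ω` and `(Q_w)_{w ∈ W}` a family of probability mass
functions with `Q_w x > 0` whenever `P x > 0`.  Suppose some `w'` has
`KL(P, Q_{w'}) = 0` and attains the infimum of the log-loss risk
`L(w) = -∑ₓ P x * log (Q_w x)`.  If `L(w̄) ≤ inf_w L(w) + ε` with `ε ≥ 0`,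
then `KL(P, Q_w̄) ≤ ε` and (via Pinsker's inequality)
`∑ₓ |P x - Q_w̄ x| ≤ √(2ε)`. -/
theorem klDiv_le_and_l1_le_of_nearly_optimal_risk
    {Ω W : Type*} [Fintype Ω] [Nonempty Ω]
    (P : Ω → ℝ) (Q : W → Ω → ℝ)
    (hP : ∀ x, 0 ≤ P x) (hPsum : ∑ x, P x = 1)
    (hQ : ∀ w x, 0 ≤ Q w x) (hQsum : ∀ w, ∑ x, Q w x = 1)
    (habs : ∀ w x, 0 < P x → 0 < Q w x)
    (w' : W) (hw'kl : klDivergence P (Q w') = 0)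
    (hw'inf : logRisk P Q w' = ⨅ w, logRisk P Q w)
    (ε : ℝ) (hε : 0 ≤ ε)
    (wbar : W) (hwbar : logRisk P Q wbar ≤ (⨅ w, logRisk P Q w) + ε) :
    klDivergence P (Q wbar) ≤ ε ∧
    ∑ x, |P x - Q wbar x| ≤ Real.sqrt (2 * ε) := by
  have hkl : klDivergence P (Q wbar) ≤ ε := by
    rw [← hw'inf, logRisk_eq P Q hP wbar (habs wbar), logRisk_eq P Q hP w' (habs w'), hw'kl]
      at hwbar
    linarith
  refine ⟨hkl, Real.le_sqrt_of_sq_le ?_⟩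
  linarith [pinsker P (Q wbar) hP hPsum (hQ wbar) (hQsum wbar) (habs wbar)]
end
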